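/- Let A and B be 2×2 positive semidefinite complex matrices with diagonalizations A = V diag(a_1, a_2) V* and B = W diag(b_1, b_2) W*, where V, W are unitary and a_1 ≥ a_2 ≥ 0, b_1 ≥ b_2 ≥ 0. Then G_p := (A^p # B^p)^{2/p} converges as p → ∞ to a positive semidefinite matrix whose eigenvalues (λ̂_1, λ̂_2) (in decreasing order) are (a_1 b_1, a_2 b_2) if the (1,2) entry of V*W is zero, and (max{a_1 b_2, a_2 b_1}, min{a_1 b_2, a_2 b_1}) if the (1,2) entry of V*W is nonzero. -/

import Mathlib

open Matrix Filter Topology Finset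
open scoped ComplexOrder

/-- Functional-calculus power of a (Hermitian, in practice positive semidefinite)
matrix, with the convention `0 ^ r = 0` for `r > 0`. -/
noncomputable def psdPow {d : ℕ} (A : Matrix (Fin d) (Fin d) ℂ) (r : ℝ) :
    Matrix (Fin d) (Fin d) ℂ :=
  if hA : A.IsHermitian then
    (hA.eigenvectorUnitary : Matrix (Fin d) (Fin d) ℂ) *
      Matrix.diagonal (fun i => ((hA.eigenvalues i ^ r : ℝ) : ℂ)) *
      star (hA.eigenvectorUnitary : Matrix (Fin d) (Fin d) ℂ)
  else 0

/-- The eigenvalues of a Hermitian matrix, sorted in decreasing order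
(with multiplicities). -/
noncomputable def eigsDesc {d : ℕ} (A : Matrix (Fin d) (Fin d) ℂ) : Fin d → ℝ :=
  if hA : A.IsHermitian then
    fun i => hA.eigenvalues (Tuple.sort hA.eigenvalues i.rev)
  else 0

/-- The geometric mean `X # Y = X^{1/2} (X^{-1/2} Y X^{-1/2})^{1/2} X^{1/2}`,
as used for positive definite `X` (negative functional-calculus powers are taken in the
generalized-inverse sense). -/
noncomputable def geoMeanPD {d : ℕ} (X Y : Matrix (Fin d) (Fin d) ℂ) :
    Matrix (Fin d) (Fin d) ℂ :=
  psdPow X (1 / 2) *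
    psdPow (psdPow X (-(1 / 2)) * Y * psdPow X (-(1 / 2))) (1 / 2) *
    psdPow X (1 / 2)

/-- The geometric mean of two positive semidefinite matrices:
`X # Y := lim_{ε↓0} (X + εI) # (Y + εI)`. -/
noncomputable def geoMean {d : ℕ} (X Y : Matrix (Fin d) (Fin d) ℂ) :
    Matrix (Fin d) (Fin d) ℂ :=
  limUnder (nhdsWithin (0 : ℝ) (Set.Ioi 0))
    (fun ε : ℝ => geoMeanPD (X + (ε : ℂ) • 1) (Y + (ε : ℂ) • 1))

/-- `Gmat A B p = (A^p # B^p)^{2/p}`. -/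
noncomputable def Gmat {d : ℕ} (A B : Matrix (Fin d) (Fin d) ℂ) (p : ℝ) :
    Matrix (Fin d) (Fin d) ℂ :=
  psdPow (geoMean (psdPow A p) (psdPow B p)) (2 / p)

/-- The decreasing rearrangement of a tuple of reals. -/
noncomputable def sortDesc {d : ℕ} (x : Fin d → ℝ) : Fin d → ℝ :=
  fun i => x (Tuple.sort x i.rev)

/-- Log-majorization `x ≺_(log) y` of tuples of nonnegative reals: each partial product
of the `k` largest entries of `x` is at most the corresponding one for `y`, with equality
for the full products. -/
def IsLogMaj {d : ℕ} (x y : Fin d → ℝ) : Prop :=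
  (∀ k : Fin d, ∏ i ∈ Finset.Iic k, sortDesc x i ≤ ∏ i ∈ Finset.Iic k, sortDesc y i) ∧
    ∏ i, x i = ∏ i, y i


/-- Conjugated real diagonal matrix. -/
noncomputable def cj (U : Matrix (Fin 2) (Fin 2) ℂ) (x : Fin 2 → ℝ) :
    Matrix (Fin 2) (Fin 2) ℂ :=
  U * Matrix.diagonal (fun i => (x i : ℂ)) * Uᴴ

lemma cj_herm (U : Matrix (Fin 2) (Fin 2) ℂ) (x : Fin 2 → ℝ) : (cj U x).IsHermitian := by
  unfold cj Matrix.IsHermitian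
  simp [Matrix.conjTranspose_mul, Matrix.mul_assoc, Matrix.diagonal_conjTranspose]
  congr 3
  funext i; simp

lemma cj_psd (U : Matrix (Fin 2) (Fin 2) ℂ) (x : Fin 2 → ℝ) (hx : ∀ i, 0 ≤ x i) :
    (cj U x).PosSemidef := by
  unfold cj
  apply Matrix.PosSemidef.mul_mul_conjTranspose_same
  rw [Matrix.posSemidef_diagonal_iff]
  intro i
  exact_mod_cast hx i

lemma uni_l {U : Matrix (Fin 2) (Fin 2) ℂ} (hU : U ∈ Matrix.unitaryGroup (Fin 2) ℂ) :
    Uᴴ * U = 1 := by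
  have := Matrix.mem_unitaryGroup_iff'.1 hU
  simpa [Matrix.star_eq_conjTranspose] using this

lemma uni_r {U : Matrix (Fin 2) (Fin 2) ℂ} (hU : U ∈ Matrix.unitaryGroup (Fin 2) ℂ) :
    U * Uᴴ = 1 := by
  have := Matrix.mem_unitaryGroup_iff.1 hU
  simpa [Matrix.star_eq_conjTranspose] using this

lemma cj_mul {U : Matrix (Fin 2) (Fin 2) ℂ} (hU : U ∈ Matrix.unitaryGroup (Fin 2) ℂ)
    (x y : Fin 2 → ℝ) : cj U x * cj U y = cj U (fun i => x i * y i) := by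
  unfold cj
  calc _ = U * Matrix.diagonal (fun i => (x i : ℂ)) * (Uᴴ * U) *
        Matrix.diagonal (fun i => (y i : ℂ)) * Uᴴ := by simp only [Matrix.mul_assoc]
    _ = _ := by
      rw [uni_l hU, Matrix.mul_one, Matrix.mul_assoc U, Matrix.diagonal_mul_diagonal]
      simp

lemma cj_add (U : Matrix (Fin 2) (Fin 2) ℂ)
    (x y : Fin 2 → ℝ) : cj U x + cj U y = cj U (fun i => x i + y i) := by
  unfold cj
  rw [← Matrix.add_mul, ← Matrix.mul_add, Matrix.diagonal_add]
  simp

lemma cj_smul (U : Matrix (Fin 2) (Fin 2) ℂ)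
    (x : Fin 2 → ℝ) (c : ℝ) : (c : ℂ) • cj U x = cj U (fun i => c * x i) := by
  unfold cj
  rw [← Matrix.smul_mul, ← Matrix.mul_smul, ← Matrix.diagonal_smul]
  congr 3
  ext i; simp

lemma cj_const {U : Matrix (Fin 2) (Fin 2) ℂ} (hU : U ∈ Matrix.unitaryGroup (Fin 2) ℂ)
    (c : ℝ) : cj U (fun _ => c) = (c : ℂ) • 1 := by
  unfold cj
  rw [show Matrix.diagonal (fun _ : Fin 2 => (c : ℂ)) = (c : ℂ) • 1 by
    ext i j; simp [Matrix.diagonal_apply, Matrix.one_apply]]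
  simp [uni_r hU]

lemma cj_det {U : Matrix (Fin 2) (Fin 2) ℂ} (hU : U ∈ Matrix.unitaryGroup (Fin 2) ℂ)
    (x : Fin 2 → ℝ) : (cj U x).det = ((x 0 * x 1 : ℝ) : ℂ) := by
  unfold cj
  have h := congrArg Matrix.det (uni_r hU)
  rw [Matrix.det_mul] at h
  rw [Matrix.det_mul, Matrix.det_mul, Matrix.det_diagonal, mul_right_comm, h]
  simp

lemma cj_trace {U : Matrix (Fin 2) (Fin 2) ℂ} (hU : U ∈ Matrix.unitaryGroup (Fin 2) ℂ)
    (x : Fin 2 → ℝ) : (cj U x).trace = ((x 0 + x 1 : ℝ) : ℂ) := by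
  unfold cj
  rw [Matrix.trace_mul_comm, ← Matrix.mul_assoc, uni_l hU, Matrix.one_mul]
  simp

/-- Uniqueness of the functional calculus. -/
lemma fc_unique {U E : Matrix (Fin 2) (Fin 2) ℂ} (hU : U ∈ Matrix.unitaryGroup (Fin 2) ℂ)
    (hE : E ∈ Matrix.unitaryGroup (Fin 2) ℂ) (x y : Fin 2 → ℝ) (f : ℝ → ℝ)
    (h : cj U x = cj E y) : cj U (fun i => f (x i)) = cj E (fun i => f (y i)) := by
  have key : ∀ x y : Fin 2 → ℝ, cj U x = cj E y ↔ (Eᴴ * U) * Matrix.diagonal (fun i => (x i : ℂ))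
      = Matrix.diagonal (fun i => (y i : ℂ)) * (Eᴴ * U) := by
    intro x y
    unfold cj
    constructor
    · intro h
      have h2 : Eᴴ * (U * Matrix.diagonal (fun i => (x i : ℂ)) * Uᴴ) * U =
        Eᴴ * (E * Matrix.diagonal (fun i => (y i : ℂ)) * Eᴴ) * U := by rw [h]
      simp only [Matrix.mul_assoc, uni_l hU, Matrix.mul_one] at h2
      rw [← Matrix.mul_assoc Eᴴ E, uni_l hE, Matrix.one_mul] at h2
      simpa only [Matrix.mul_assoc] using h2
    · intro h
      have h2 : E * ((Eᴴ * U) * Matrix.diagonal (fun i => (x i : ℂ))) * Uᴴ =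
        E * (Matrix.diagonal (fun i => (y i : ℂ)) * (Eᴴ * U)) * Uᴴ := by rw [h]
      simp only [Matrix.mul_assoc, uni_r hU, Matrix.mul_one] at h2
      rw [← Matrix.mul_assoc E Eᴴ, uni_r hE, Matrix.one_mul] at h2
      simpa only [Matrix.mul_assoc] using h2
  rw [key] at h ⊢
  ext i j
  have hij := congrFun (congrFun h i) j
  rw [Matrix.mul_diagonal, Matrix.diagonal_mul] at hij ⊢
  by_cases hz : (Eᴴ * U) i j = 0
  · simp [hz]
  · have : (x j : ℂ) = y i := by
      rw [mul_comm] at hij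
      exact mul_right_cancel₀ hz hij
    have : x j = y i := by exact_mod_cast this
    rw [this, mul_comm]

lemma herm_eq_cj {M : Matrix (Fin 2) (Fin 2) ℂ} (h : M.IsHermitian) :
    M = cj (h.eigenvectorUnitary : Matrix (Fin 2) (Fin 2) ℂ) h.eigenvalues := by
  conv_lhs => rw [h.spectral_theorem]
  rw [Unitary.conjStarAlgAut_apply]
  rfl

lemma psdPow_cj {U : Matrix (Fin 2) (Fin 2) ℂ} (hU : U ∈ Matrix.unitaryGroup (Fin 2) ℂ)
    (x : Fin 2 → ℝ) (r : ℝ) : psdPow (cj U x) r = cj U (fun i => x i ^ r) := by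
  unfold psdPow
  rw [dif_pos (cj_herm U x)]
  exact (fc_unique hU (cj_herm U x).eigenvectorUnitary.2 x _ (fun t => t ^ r)
    (herm_eq_cj (cj_herm U x))).symm

lemma cj_swap {U : Matrix (Fin 2) (Fin 2) ℂ} (x : Fin 2 → ℝ) :
    cj (U.submatrix id (Equiv.swap 0 1)) (fun i => x (Equiv.swap 0 1 i)) = cj U x := by
  ext i j
  simp [cj, Matrix.mul_apply, Fin.sum_univ_two, Matrix.diagonal_apply]
  ring

lemma psd_eq_cj {M : Matrix (Fin 2) (Fin 2) ℂ} (h : M.PosSemidef) :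
    ∃ U ∈ Matrix.unitaryGroup (Fin 2) ℂ, ∃ x : Fin 2 → ℝ, 0 ≤ x 1 ∧ x 1 ≤ x 0 ∧ M = cj U x := by
  have hM := herm_eq_cj h.1
  have hn := h.eigenvalues_nonneg
  have hu := h.1.eigenvectorUnitary.2
  set x := h.1.eigenvalues
  set U := (h.1.eigenvectorUnitary : Matrix (Fin 2) (Fin 2) ℂ)
  rcases le_total (x 1) (x 0) with h1 | h1
  · exact ⟨U, hu, x, hn 1, h1, hM⟩
  · refine ⟨U.submatrix id (Equiv.swap 0 1), ?_, fun i => x (Equiv.swap 0 1 i), ?_, ?_, ?_⟩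
    · rw [Matrix.mem_unitaryGroup_iff]
      have := uni_r hu
      rw [← this]
      ext i j
      simp [Matrix.mul_apply, Fin.sum_univ_two]
      ring
    · simpa using hn 0
    · simpa using h1
    · rw [cj_swap]; exact hM

lemma eigsDesc_cj {U : Matrix (Fin 2) (Fin 2) ℂ} (hU : U ∈ Matrix.unitaryGroup (Fin 2) ℂ)
    (x : Fin 2 → ℝ) (hx : x 1 ≤ x 0) : eigsDesc (cj U x) = ![x 0, x 1] := by
  unfold eigsDesc
  have h := cj_herm U x
  rw [dif_pos h]
  have hd := h.det_eq_prod_eigenvalues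
  have ht := h.trace_eq_sum_eigenvalues
  rw [cj_det hU] at hd
  rw [cj_trace hU] at ht
  set e := h.eigenvalues
  have hm := Tuple.monotone_sort e
  set σ := Tuple.sort e
  have hs : ∑ i, e (σ i) = ∑ i, e i := Equiv.sum_comp σ e
  have hp : ∏ i, e (σ i) = ∏ i, e i := Equiv.prod_comp σ e
  have hm01 : e (σ 0) ≤ e (σ 1) := hm (by decide)
  have hd' : x 0 * x 1 = ∏ i, e i := by apply Complex.ofReal_injective; rw [hd]; simp
  have ht' : x 0 + x 1 = ∑ i, e i := by apply Complex.ofReal_injective; rw [ht]; simp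
  rw [← hp, Fin.prod_univ_two] at hd'
  rw [← hs, Fin.sum_univ_two] at ht'
  have h1 : e (σ 1) = x 0 := by
    have : (e (σ 1) - x 0) * (e (σ 1) - x 1) = 0 := by linear_combination hd' + e (σ 1) * -ht'
    rcases mul_eq_zero.1 this with h | h
    · linarith
    · linarith
  have h0 : e (σ 0) = x 1 := by linarith
  ext i
  fin_cases i
  · simpa using h1
  · simpa using h0

lemma adj_cj {U : Matrix (Fin 2) (Fin 2) ℂ} (hU : U ∈ Matrix.unitaryGroup (Fin 2) ℂ)
    (x : Fin 2 → ℝ) : (cj U x).adjugate = cj U ![x 1, x 0] := by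
  have h1 : ∀ M : Matrix (Fin 2) (Fin 2) ℂ, M + M.adjugate = M.trace • 1 := by
    intro M
    rw [Matrix.adjugate_fin_two]
    ext i j
    fin_cases i <;> fin_cases j <;> simp [Matrix.trace_fin_two, add_comm]
  have h2 := h1 (cj U x)
  rw [cj_trace hU, ← cj_const hU] at h2
  have h3 : cj U x + cj U ![x 1, x 0] = cj U (fun _ => x 0 + x 1) := by
    rw [cj_add]; congr 1; ext i; fin_cases i <;> simp [add_comm]
  rw [← h3] at h2
  exact add_left_cancel h2

lemma uni_entries {U : Matrix (Fin 2) (Fin 2) ℂ} (hU : U ∈ Matrix.unitaryGroup (Fin 2) ℂ) :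
    Complex.normSq (U 0 0) = 1 - Complex.normSq (U 0 1) ∧
    Complex.normSq (U 1 0) = Complex.normSq (U 0 1) ∧
    Complex.normSq (U 1 1) = 1 - Complex.normSq (U 0 1) := by
  have a0 := congrFun (congrFun (uni_l hU) 1) 1
  have a1 := congrFun (congrFun (uni_r hU) 0) 0
  have a2 := congrFun (congrFun (uni_r hU) 1) 1
  simp only [Matrix.mul_apply, Fin.sum_univ_two, Matrix.conjTranspose_apply, Matrix.one_apply_eq,
    Complex.star_def, Complex.mul_conj, ← Complex.normSq_eq_conj_mul_self] at a0 a1 a2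
  norm_cast at a0 a1 a2
  refine ⟨?_, ?_, ?_⟩ <;> linarith

/-- trace of `adj X * Y` -/
noncomputable def TT (u : ℝ) (x y : Fin 2 → ℝ) : ℝ :=
  x 1 * (y 0 * (1 - u) + y 1 * u) + x 0 * (y 0 * u + y 1 * (1 - u))

lemma trace_adj {V W : Matrix (Fin 2) (Fin 2) ℂ} (hV : V ∈ Matrix.unitaryGroup (Fin 2) ℂ)
    (hW : W ∈ Matrix.unitaryGroup (Fin 2) ℂ) (x y : Fin 2 → ℝ) :
    ((cj V x).adjugate * cj W y).trace = (TT (Complex.normSq ((Vᴴ * W) 0 1)) x y : ℂ) := by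
  have hU : Vᴴ * W ∈ Matrix.unitaryGroup (Fin 2) ℂ :=
    mul_mem (Unitary.star_mem hV) hW
  obtain ⟨h1, h2, h3⟩ := uni_entries hU
  rw [adj_cj hV]
  have h4 : (cj V ![x 1, x 0] * cj W y).trace =
    (Matrix.diagonal (fun i => ((![x 1, x 0] i : ℝ) : ℂ)) * ((Vᴴ * W) *
      Matrix.diagonal (fun i => (y i : ℂ)) * (Vᴴ * W)ᴴ)).trace := by
    unfold cj
    rw [Matrix.conjTranspose_mul, Matrix.conjTranspose_conjTranspose]
    rw [Matrix.mul_assoc V, Matrix.mul_assoc V, Matrix.trace_mul_comm V]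
    simp only [Matrix.mul_assoc]
  rw [h4]
  generalize Vᴴ * W = U at *
  have h5 : ∀ i, (U * Matrix.diagonal (fun i => (y i : ℂ)) * Uᴴ) i i =
      ((y 0 * Complex.normSq (U i 0) + y 1 * Complex.normSq (U i 1) : ℝ) : ℂ) := by
    intro i
    simp only [Matrix.mul_apply, Fin.sum_univ_two, Matrix.conjTranspose_apply,
      Complex.star_def, Matrix.diagonal_apply]
    push_cast
    rw [← Complex.mul_conj, ← Complex.mul_conj]
    simp
    ring
  rw [Matrix.trace_fin_two, Matrix.diagonal_mul, Matrix.diagonal_mul, h5, h5, h1, h2, h3]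
  simp [TT]

lemma det_comb (X Y : Matrix (Fin 2) (Fin 2) ℂ) (s t : ℂ) :
    (s • X + t • Y).det = s ^ 2 * X.det + t ^ 2 * Y.det + s * t * (X.adjugate * Y).trace := by
  rw [Matrix.adjugate_fin_two, Matrix.det_fin_two, Matrix.det_fin_two, Matrix.det_fin_two,
    Matrix.trace_fin_two]
  simp [Matrix.mul_apply, Fin.sum_univ_two]
  ring

lemma geoMeanPD_formula {V : Matrix (Fin 2) (Fin 2) ℂ} (hV : V ∈ Matrix.unitaryGroup (Fin 2) ℂ)
    (x : Fin 2 → ℝ) (hx : ∀ i, 0 < x i) (Y : Matrix (Fin 2) (Fin 2) ℂ) (hY : Y.PosSemidef)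
    (β D : ℝ) (hβ : 0 ≤ β) (hD : 0 < D) (hβY : Y.det = ((β ^ 2 : ℝ) : ℂ))
    (hDD : ((cj V x).adjugate * Y).trace =
      ((D ^ 2 - 2 * √(x 0 * x 1) * β : ℝ) : ℂ)) :
    geoMeanPD (cj V x) Y =
      ((1 / D : ℝ) : ℂ) • ((β : ℂ) • cj V x + ((√(x 0 * x 1) : ℝ) : ℂ) • Y) := by
  set α := √(x 0 * x 1) with hα
  have hα0 : 0 < α := Real.sqrt_pos.2 (mul_pos (hx 0) (hx 1))
  have hα2 : α ^ 2 = x 0 * x 1 := Real.sq_sqrt (mul_pos (hx 0) (hx 1)).le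
  unfold geoMeanPD
  rw [psdPow_cj hV, psdPow_cj hV]
  set S := cj V (fun i => x i ^ (1 / 2 : ℝ)) with hS
  set R := cj V (fun i => x i ^ (-(1 / 2) : ℝ)) with hR
  set X := cj V x with hX
  have hSS : S * S = X := by
    rw [hS, cj_mul hV]; congr 1; ext i
    rw [← Real.rpow_add (hx i)]; norm_num
  have hSR : S * R = 1 := by
    rw [hS, hR, cj_mul hV]
    rw [show (fun i => x i ^ (1 / 2 : ℝ) * x i ^ (-(1 / 2) : ℝ)) = fun _ => (1 : ℝ) by
      ext i; rw [← Real.rpow_add (hx i)]; norm_num]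
    rw [cj_const hV]; simp
  have hRS : R * S = 1 := mul_eq_one_comm.1 hSR
  have hdS : S.det = (α : ℂ) := by
    rw [hS, cj_det hV, hα, Real.sqrt_eq_rpow, Real.mul_rpow (hx 0).le (hx 1).le]
  have hdR : (α : ℂ) * R.det = 1 := by
    rw [← hdS, ← Matrix.det_mul, hSR, Matrix.det_one]
  have hRh : Rᴴ = R := cj_herm V _
  have hZ : (R * Y * R).PosSemidef := by
    have := hY.mul_mul_conjTranspose_same R
    rwa [hRh] at this
  obtain ⟨E, hE, z, hz1, hz0, hZE⟩ := psd_eq_cj hZ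
  have hz : ∀ i, 0 ≤ z i := by
    intro i; fin_cases i
    · exact hz1.trans hz0
    · exact hz1
  rw [hZE, psdPow_cj hE]
  set N := cj E (fun i => z i ^ (1 / 2 : ℝ)) with hN
  have hNN : N * N = R * Y * R := by
    rw [hZE, hN, cj_mul hE]; congr 1; ext i
    rw [← Real.sqrt_eq_rpow, Real.mul_self_sqrt (hz i)]
  set n : ℝ := z 0 ^ (1 / 2 : ℝ) * z 1 ^ (1 / 2 : ℝ) with hn
  set t : ℝ := z 0 ^ (1 / 2 : ℝ) + z 1 ^ (1 / 2 : ℝ) with ht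
  have hn0 : 0 ≤ n := mul_nonneg (Real.rpow_nonneg (hz 0) _) (Real.rpow_nonneg (hz 1) _)
  have ht0 : 0 ≤ t := add_nonneg (Real.rpow_nonneg (hz 0) _) (Real.rpow_nonneg (hz 1) _)
  have hCH : (t : ℂ) • N = R * Y * R + (n : ℂ) • 1 := by
    rw [hZE, hN, cj_smul, ← cj_const hE, cj_add]
    congr 1; ext i
    have h0 := Real.mul_self_sqrt (hz 0)
    have h1 := Real.mul_self_sqrt (hz 1)
    rw [Real.sqrt_eq_rpow] at h0 h1
    fin_cases i
    · simp only [ht, hn, Fin.zero_eta]; linear_combination h0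
    · simp only [ht, hn, Fin.mk_one]; linear_combination h1
  have hdN : N.det = (n : ℂ) := by rw [hN, cj_det hE]
  have htN : N.trace = (t : ℂ) := by rw [hN, cj_trace hE]
  have hnα : α * n = β := by
    have h1 : ((α * n) ^ 2 : ℝ) = β ^ 2 := by
      apply Complex.ofReal_injective
      rw [← hβY]
      push_cast
      have := congrArg Matrix.det hNN
      rw [Matrix.det_mul, Matrix.det_mul, Matrix.det_mul, hdN] at this
      linear_combination (α : ℂ) ^ 2 * this + Y.det * ((α : ℂ) * R.det + 1) * hdR
    exact (sq_eq_sq₀ (by positivity) hβ).1 h1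
  have htr : (α : ℂ) ^ 2 * (R * Y * R).trace = (X.adjugate * Y).trace := by
    have hXRR : X * (R * R) = 1 := by
      rw [← hSS, Matrix.mul_assoc, ← Matrix.mul_assoc S R, hSR, Matrix.one_mul, hSR]
    have hadj : X.adjugate = (α : ℂ) ^ 2 • (R * R) := by
      have : X.adjugate * (X * (R * R)) = X.adjugate := by rw [hXRR, Matrix.mul_one]
      rw [← this, ← Matrix.mul_assoc, Matrix.adjugate_mul, hX, cj_det hV, ← hα2]
      simp
    rw [hadj, Matrix.trace_mul_comm (R * Y), ← Matrix.mul_assoc]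
    simp
  have hαt : α * t = D := by
    have h1 : ((α * t) ^ 2 : ℝ) = D ^ 2 := by
      have h2 := congrArg Matrix.trace hCH
      have h3 := htr.trans hDD
      rw [Matrix.trace_add, Matrix.trace_smul, Matrix.trace_smul, htN] at h2
      simp only [Matrix.trace_one, Fintype.card_fin, smul_eq_mul] at h2
      apply Complex.ofReal_injective
      have h4 : (α : ℂ) * n = β := by exact_mod_cast hnα
      push_cast at h2 h3 ⊢
      linear_combination (α : ℂ) ^ 2 * h2 + h3 + 2 * (α : ℂ) * h4
    exact (sq_eq_sq₀ (by positivity) hD.le).1 h1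
  have hG : (D : ℂ) • (S * N * S) = (β : ℂ) • X + (α : ℂ) • Y := by
    have h1 : S * (R * Y * R) * S = Y := by
      calc _ = (S * R) * Y * (R * S) := by simp only [Matrix.mul_assoc]
        _ = Y := by rw [hSR, hRS]; simp
    have h2 : (t : ℂ) • (S * N * S) = Y + (n : ℂ) • X := by
      rw [← Matrix.smul_mul, ← Matrix.mul_smul, hCH, Matrix.mul_add, Matrix.add_mul, h1]
      simp [hSS]
    rw [← hαt, ← hnα]
    push_cast
    rw [mul_smul, h2, smul_add, smul_smul, add_comm]
  rw [← hG, smul_smul]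
  have : ((1 / D : ℝ) : ℂ) * (D : ℂ) = 1 := by
    rw [← Complex.ofReal_mul]; field_simp; simp
  rw [this, one_smul]

lemma cj_tendsto {ι : Type*} {l : Filter ι} (V : Matrix (Fin 2) (Fin 2) ℂ) (f : ι → Fin 2 → ℝ)
    (x : Fin 2 → ℝ) (h : ∀ i, Tendsto (fun k => f k i) l (𝓝 (x i))) :
    Tendsto (fun k => cj V (f k)) l (𝓝 (cj V x)) := by
  have hc : Continuous (fun x : Fin 2 → ℝ => cj V x) := by
    unfold cj
    apply Continuous.matrix_mul _ continuous_const
    apply Continuous.matrix_mul continuous_const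
    apply Continuous.matrix_diagonal
    fun_prop
  exact (hc.tendsto x).comp (tendsto_pi_nhds.2 h)

lemma cj_eps {V : Matrix (Fin 2) (Fin 2) ℂ} (hV : V ∈ Matrix.unitaryGroup (Fin 2) ℂ)
    (x : Fin 2 → ℝ) (ε : ℝ) : cj V x + (ε : ℂ) • 1 = cj V (fun i => x i + ε) := by
  rw [← cj_const hV, cj_add]

lemma tend_eps (c : ℝ) : Tendsto (fun ε : ℝ => c + ε) (𝓝[>] 0) (𝓝 c) := by
  have : Tendsto (fun ε : ℝ => c + ε) (𝓝 0) (𝓝 (c + 0)) := tendsto_id.const_add c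
  rw [add_zero] at this
  exact this.mono_left nhdsWithin_le_nhds

lemma geoMean_formula {V W : Matrix (Fin 2) (Fin 2) ℂ} (hV : V ∈ Matrix.unitaryGroup (Fin 2) ℂ)
    (hW : W ∈ Matrix.unitaryGroup (Fin 2) ℂ)
    (x y : Fin 2 → ℝ) (hx : ∀ i, 0 ≤ x i) (hy : ∀ i, 0 ≤ y i)
    (u : ℝ) (hu : u = Complex.normSq ((Vᴴ * W) 0 1))
    (hD : 0 < 2 * √(x 0 * x 1) * √(y 0 * y 1) + TT u x y) :
    geoMean (cj V x) (cj W y) =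
      ((1 / √(2 * √(x 0 * x 1) * √(y 0 * y 1) + TT u x y) : ℝ) : ℂ) •
        (((√(y 0 * y 1) : ℝ) : ℂ) • cj V x + ((√(x 0 * x 1) : ℝ) : ℂ) • cj W y) := by
  unfold geoMean
  apply Tendsto.limUnder_eq
  have tx := fun i => tend_eps (x i)
  have ty := fun i => tend_eps (y i)
  have hα : Tendsto (fun ε : ℝ => √((x 0 + ε) * (x 1 + ε))) (𝓝[>] 0) (𝓝 (√(x 0 * x 1))) :=
    ((tx 0).mul (tx 1)).sqrt
  have hβ : Tendsto (fun ε : ℝ => √((y 0 + ε) * (y 1 + ε))) (𝓝[>] 0) (𝓝 (√(y 0 * y 1))) :=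
    ((ty 0).mul (ty 1)).sqrt
  have hT : Tendsto (fun ε : ℝ => TT u (fun i => x i + ε) (fun i => y i + ε)) (𝓝[>] 0)
      (𝓝 (TT u x y)) := by
    unfold TT
    exact ((tx 1).mul (((ty 0).mul_const _).add ((ty 1).mul_const _))).add
      ((tx 0).mul (((ty 0).mul_const _).add ((ty 1).mul_const _)))
  have hDt := (((hα.const_mul 2).mul hβ).add hT)
  have hpos := hDt.eventually_const_lt hD
  have hlim : Tendsto (fun ε : ℝ => ((1 / √(2 * √((x 0 + ε) * (x 1 + ε)) *
      √((y 0 + ε) * (y 1 + ε)) + TT u (fun i => x i + ε) (fun i => y i + ε)) : ℝ) : ℂ) •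
        (((√((y 0 + ε) * (y 1 + ε)) : ℝ) : ℂ) • cj V (fun i => x i + ε) +
          ((√((x 0 + ε) * (x 1 + ε)) : ℝ) : ℂ) • cj W (fun i => y i + ε))) (𝓝[>] 0)
      (𝓝 (((1 / √(2 * √(x 0 * x 1) * √(y 0 * y 1) + TT u x y) : ℝ) : ℂ) •
        (((√(y 0 * y 1) : ℝ) : ℂ) • cj V x + ((√(x 0 * x 1) : ℝ) : ℂ) • cj W y))) := by
    refine Tendsto.smul ?_ (Tendsto.add (Tendsto.smul ?_ ?_) (Tendsto.smul ?_ ?_))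
    · exact (Complex.continuous_ofReal.tendsto _).comp
        (tendsto_const_nhds.div hDt.sqrt (Real.sqrt_pos.2 hD).ne')
    · exact (Complex.continuous_ofReal.tendsto _).comp hβ
    · exact cj_tendsto V _ _ tx
    · exact (Complex.continuous_ofReal.tendsto _).comp hα
    · exact cj_tendsto W _ _ ty
  refine hlim.congr' ?_
  filter_upwards [hpos, self_mem_nhdsWithin] with ε h1 h2
  have h2 : 0 < ε := h2
  rw [cj_eps hV, cj_eps hW]
  symm
  have hxe : ∀ i, 0 < x i + ε := fun i => by have := hx i; linarith
  have hye : ∀ i, 0 < y i + ε := fun i => by have := hy i; linarith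
  apply geoMeanPD_formula hV _ hxe _ (cj_psd W _ fun i => (hye i).le) _ _ (Real.sqrt_nonneg _)
    (Real.sqrt_pos.2 h1)
  · rw [cj_det hW, Real.sq_sqrt (mul_pos (hye 0) (hye 1)).le]
  · rw [trace_adj hV hW, Real.sq_sqrt h1.le, hu]
    congr 1
    ring

lemma geoMean_comm {V : Matrix (Fin 2) (Fin 2) ℂ} (hV : V ∈ Matrix.unitaryGroup (Fin 2) ℂ)
    (x y : Fin 2 → ℝ) (hx : ∀ i, 0 ≤ x i) (hy : ∀ i, 0 ≤ y i) :
    geoMean (cj V x) (cj V y) = cj V (fun i => √(x i * y i)) := by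
  unfold geoMean
  apply Tendsto.limUnder_eq
  have hlim : Tendsto (fun ε : ℝ => cj V (fun i => √((x i + ε) * (y i + ε)))) (𝓝[>] 0)
      (𝓝 (cj V (fun i => √(x i * y i)))) :=
    cj_tendsto V _ _ fun i => ((tend_eps (x i)).mul (tend_eps (y i))).sqrt
  refine hlim.congr' ?_
  filter_upwards [self_mem_nhdsWithin] with ε h2
  have h2 : 0 < ε := h2
  rw [cj_eps hV, cj_eps hV]
  have hxe : ∀ i, 0 < x i + ε := fun i => by have := hx i; linarith
  have hye : ∀ i, 0 < y i + ε := fun i => by have := hy i; linarith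
  unfold geoMeanPD
  rw [psdPow_cj hV, psdPow_cj hV, cj_mul hV, cj_mul hV, psdPow_cj hV, cj_mul hV, cj_mul hV]
  congr 1
  ext i
  have ha := hxe i
  have hb := hye i
  generalize x i + ε = s at *
  generalize y i + ε = t at *
  have e1 : s ^ (-(1 / 2) : ℝ) * t * s ^ (-(1 / 2) : ℝ) = t / s := by
    have : s ^ (-(1 / 2) : ℝ) * s ^ (-(1 / 2) : ℝ) = s⁻¹ := by
      rw [← Real.rpow_add ha, ← Real.rpow_neg_one]; norm_num
    rw [mul_right_comm, this]; field_simp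
  rw [e1, ← Real.sqrt_eq_rpow, ← Real.sqrt_eq_rpow, mul_right_comm, Real.mul_self_sqrt ha.le]
  rw [Real.sqrt_div hb.le, Real.sqrt_mul ha.le]
  have := Real.mul_self_sqrt ha.le
  have h0 : √s ≠ 0 := (Real.sqrt_pos.2 ha).ne'
  field_simp
  rw [sq, this]

lemma Gmat_comm {V : Matrix (Fin 2) (Fin 2) ℂ} (hV : V ∈ Matrix.unitaryGroup (Fin 2) ℂ)
    (a b : Fin 2 → ℝ) (ha : ∀ i, 0 ≤ a i) (hb : ∀ i, 0 ≤ b i) (p : ℝ) (hp : 0 < p) :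
    Gmat (cj V a) (cj V b) p = cj V (fun i => a i * b i) := by
  unfold Gmat
  rw [psdPow_cj hV, psdPow_cj hV, geoMean_comm hV _ _ (fun i => Real.rpow_nonneg (ha i) _)
    (fun i => Real.rpow_nonneg (hb i) _), psdPow_cj hV]
  congr 1
  ext i
  have := mul_nonneg (ha i) (hb i)
  rw [← Real.mul_rpow (ha i) (hb i), Real.sqrt_eq_rpow, ← Real.rpow_mul this, ← Real.rpow_mul this,
    show p * (1 / 2) * (2 / p) = 1 by field_simp, Real.rpow_one]

lemma cj_bound {U : Matrix (Fin 2) (Fin 2) ℂ} (hU : U ∈ Matrix.unitaryGroup (Fin 2) ℂ)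
    (y : Fin 2 → ℝ) (hy : ∀ i, |y i| ≤ 1) (i j : Fin 2) : ‖cj U y i j‖ ≤ 2 := by
  have h : cj U y i j = U i 0 * y 0 * star (U j 0) + U i 1 * y 1 * star (U j 1) := by
    simp [cj, Matrix.mul_apply, Fin.sum_univ_two, Matrix.diagonal_apply]
  have hb : ∀ k, ‖U i k * y k * star (U j k)‖ ≤ 1 := by
    intro k
    rw [norm_mul, norm_mul, norm_star, Complex.norm_real, Real.norm_eq_abs]
    have h1 := entry_norm_bound_of_unitary hU i k
    have h2 := entry_norm_bound_of_unitary hU j k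
    exact mul_le_one₀ (mul_le_one₀ h1 (abs_nonneg _) (hy k)) (norm_nonneg _) h2
  rw [h]
  calc _ ≤ _ := norm_add_le _ _
    _ ≤ 1 + 1 := add_le_add (hb 0) (hb 1)
    _ = 2 := by norm_num

lemma smul_bdd_tendsto {l : Filter ℝ} (f : ℝ → ℝ) (P : ℝ → Matrix (Fin 2) (Fin 2) ℂ)
    (hf : Tendsto f l (𝓝 0)) (hP : ∀ p i j, ‖P p i j‖ ≤ 2) :
    Tendsto (fun p => (f p : ℂ) • P p) l (𝓝 0) := by
  refine tendsto_pi_nhds.2 fun i => tendsto_pi_nhds.2 fun j => ?_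
  have h0 : Tendsto (fun p => |f p| * 2) l (𝓝 0) := by
    have := hf.abs.mul_const 2
    simpa using this
  refine squeeze_zero_norm (fun p => ?_) h0
  simp only [Matrix.smul_apply, smul_eq_mul, norm_mul, Complex.norm_real, Real.norm_eq_abs]
  exact mul_le_mul_of_nonneg_left (hP p i j) (abs_nonneg _)

lemma const_rpow_tendsto (c : ℝ) (hc : 0 < c) :
    Tendsto (fun p : ℝ => c ^ (2 / p)) atTop (𝓝 1) := by
  have h : Tendsto (fun p : ℝ => 2 / p) atTop (𝓝 0) := tendsto_const_nhds.div_atTop tendsto_id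
  have := ((Real.continuous_const_rpow hc.ne').tendsto 0).comp h
  rw [Real.rpow_zero] at this
  exact this

lemma sqrt_pow_pow (m : ℝ) (hm : 0 ≤ m) (p : ℝ) (hp : 0 < p) : (√m ^ p) ^ (2 / p) = m := by
  rw [← Real.rpow_mul (Real.sqrt_nonneg _), show p * (2 / p) = (2 : ℝ) by field_simp]
  rw [Real.rpow_two, Real.sq_sqrt hm]

lemma eig_limits (x : ℝ → Fin 2 → ℝ) (h1 : ∀ p, 0 ≤ x p 1) (h01 : ∀ p, x p 1 ≤ x p 0)
    (m m' k K : ℝ) (hk : 0 < k) (hK : 0 < K) (hm' : 0 ≤ m') (hmm : m' ≤ m)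
    (hlow : ∀ p, 0 < p → k * √m ^ p ≤ x p 0 + x p 1)
    (hup : ∀ p, 0 < p → x p 0 + x p 1 ≤ K * √m ^ p)
    (hdet : ∀ p, 0 < p → x p 0 * x p 1 = √(m * m') ^ p) :
    Tendsto (fun p => x p 0 ^ (2 / p)) atTop (𝓝 m) ∧
    Tendsto (fun p => x p 1 ^ (2 / p)) atTop (𝓝 m') := by
  have hm : 0 ≤ m := hm'.trans hmm
  have hr : ∀ p : ℝ, 0 ≤ √m ^ p := fun p => Real.rpow_nonneg (Real.sqrt_nonneg _) _
  have A : Tendsto (fun p => x p 0 ^ (2 / p)) atTop (𝓝 m) := by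
    have l1 : Tendsto (fun p : ℝ => (k / 2) ^ (2 / p) * m) atTop (𝓝 m) := by
      simpa using (const_rpow_tendsto (k / 2) (by positivity)).mul_const m
    have l2 : Tendsto (fun p : ℝ => K ^ (2 / p) * m) atTop (𝓝 m) := by
      simpa using (const_rpow_tendsto K hK).mul_const m
    refine tendsto_of_tendsto_of_tendsto_of_le_of_le' l1 l2 ?_ ?_
    · filter_upwards [eventually_gt_atTop 0] with p hp
      rw [← sqrt_pow_pow m hm p hp, ← Real.mul_rpow (by positivity) (hr p)]
      apply Real.rpow_le_rpow (mul_nonneg (by positivity) (hr p)) _ (by positivity)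
      have := hlow p hp
      have := h01 p
      linarith
    · filter_upwards [eventually_gt_atTop 0] with p hp
      rw [← sqrt_pow_pow m hm p hp, ← Real.mul_rpow (by positivity) (hr p)]
      apply Real.rpow_le_rpow ((h1 p).trans (h01 p)) _ (by positivity)
      have := hup p hp
      have := h1 p
      linarith
  refine ⟨A, ?_⟩
  rcases hm.eq_or_lt with h | h
  · have hm0 : m' = m := le_antisymm hmm (by rw [← h]; exact hm')
    rw [hm0, ← h]
    rw [← h] at A
    refine tendsto_of_tendsto_of_tendsto_of_le_of_le' tendsto_const_nhds A ?_ ?_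
    · filter_upwards with p
      exact Real.rpow_nonneg (h1 p) _
    · filter_upwards [eventually_gt_atTop 0] with p hp
      exact Real.rpow_le_rpow (h1 p) (h01 p) (by positivity)
  · have l : Tendsto (fun p => (m * m') / x p 0 ^ (2 / p)) atTop (𝓝 (m * m' / m)) :=
      tendsto_const_nhds.div A h.ne'
    rw [mul_div_cancel_left₀ _ h.ne'] at l
    refine l.congr' ?_
    filter_upwards [eventually_gt_atTop 0, A.eventually_const_lt h] with p hp hpos
    have e := hdet p hp
    rw [div_eq_iff hpos.ne', ← Real.mul_rpow (h1 p) ((h1 p).trans (h01 p)), mul_comm (x p 1), e,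
      sqrt_pow_pow _ (mul_nonneg hm hm') p hp]

lemma core (M : ℝ → Matrix (Fin 2) (Fin 2) ℂ) (hM : ∀ p, (M p).PosSemidef)
    (t : ℝ → ℝ) (ht : ∀ p, (M p).trace = (t p : ℂ))
    (m m' k K : ℝ) (hk : 0 < k) (hK : 0 < K) (hm' : 0 ≤ m') (hmm : m' ≤ m)
    (hlow : ∀ p, 0 < p → k * √m ^ p ≤ t p)
    (hup : ∀ p, 0 < p → t p ≤ K * √m ^ p)
    (hdet : ∀ p, 0 < p → (M p).det = ((√(m * m') ^ p : ℝ) : ℂ))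
    (V : Matrix (Fin 2) (Fin 2) ℂ) (hV : V ∈ Matrix.unitaryGroup (Fin 2) ℂ)
    (hcase : m' = m ∨ (m' < m ∧ Tendsto (fun p => ((1 / t p : ℝ) : ℂ) • M p) atTop
      (𝓝 (cj V ![1, 0])))) :
    Tendsto (fun p => psdPow (M p) (2 / p)) atTop (𝓝 (cj V ![m, m'])) := by
  choose U hU x h1 h01 hMx using fun p => psd_eq_cj (hM p)
  have hts : ∀ p, t p = x p 0 + x p 1 := by
    intro p
    apply Complex.ofReal_injective
    rw [← ht p, hMx p, cj_trace (hU p)]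
  have hds : ∀ p, 0 < p → x p 0 * x p 1 = √(m * m') ^ p := by
    intro p hp
    apply Complex.ofReal_injective
    rw [← hdet p hp, hMx p, cj_det (hU p)]
  obtain ⟨l0, l1⟩ := eig_limits x h1 h01 m m' k K hk hK hm' hmm
    (fun p hp => hts p ▸ hlow p hp) (fun p hp => hts p ▸ hup p hp) hds
  have hform : ∀ p, psdPow (M p) (2 / p) = ((x p 1 ^ (2 / p) : ℝ) : ℂ) • 1 +
      ((x p 0 ^ (2 / p) - x p 1 ^ (2 / p) : ℝ) : ℂ) • cj (U p) ![1, 0] := by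
    intro p
    rw [hMx p, psdPow_cj (hU p), cj_smul, ← cj_const (hU p), cj_add]
    congr 1; ext i; fin_cases i <;> simp
  have hlimform : cj V ![m, m'] = ((m' : ℝ) : ℂ) • 1 + ((m - m' : ℝ) : ℂ) • cj V ![1, 0] := by
    rw [cj_smul, ← cj_const hV, cj_add]
    congr 1; ext i; fin_cases i <;> simp
  have l1' : Tendsto (fun p => ((x p 1 ^ (2 / p) : ℝ) : ℂ) • (1 : Matrix (Fin 2) (Fin 2) ℂ))
      atTop (𝓝 ((m' : ℂ) • 1)) :=
    ((Complex.continuous_ofReal.tendsto _).comp l1).smul_const _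
  have l01 := l0.sub l1
  simp_rw [hform]
  rw [hlimform]
  refine l1'.add ?_
  rcases hcase with h | ⟨h, hP⟩
  · rw [h, sub_self] at l01
    rw [h, sub_self, Complex.ofReal_zero, zero_smul]
    refine smul_bdd_tendsto _ _ l01 fun p i j => cj_bound (hU p) _ ?_ i j
    intro i; fin_cases i <;> simp
  · refine ((Complex.continuous_ofReal.tendsto _).comp l01).smul ?_
    have hmpos : 0 < m := hm'.trans_lt h
    have htpos : ∀ p, 0 < p → 0 < t p := fun p hp =>
      lt_of_lt_of_le (mul_pos hk (Real.rpow_pos_of_pos (Real.sqrt_pos.2 hmpos) _)) (hlow p hp)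
    -- ratio
    have hdt : Tendsto (fun p => (((1 / t p : ℝ) : ℂ) • M p).det) atTop (𝓝 0) := by
      have hc : Continuous (fun A : Matrix (Fin 2) (Fin 2) ℂ => A.det) :=
        Continuous.matrix_det continuous_id
      have := (hc.tendsto _).comp hP
      rw [cj_det hV] at this
      simp only [Matrix.cons_val_zero, Matrix.cons_val_one, mul_zero, Complex.ofReal_zero] at this
      exact this
    have hdt' : Tendsto (fun p => (1 / t p * x p 0) * (1 / t p * x p 1)) atTop (𝓝 0) := by
      have := (Complex.continuous_re.tendsto _).comp hdt
      refine (this.congr fun p => ?_)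
      simp only [Function.comp]
      rw [hMx p, cj_smul, cj_det (hU p), Complex.ofReal_re]
    have hs : Tendsto (fun p => 1 / t p * x p 1) atTop (𝓝 0) := by
      have h2 := hdt'.const_mul 2
      rw [mul_zero] at h2
      refine tendsto_of_tendsto_of_tendsto_of_le_of_le' tendsto_const_nhds h2 ?_ ?_
      · filter_upwards [eventually_gt_atTop 0] with p hp
        have := htpos p hp
        have := h1 p
        positivity
      · filter_upwards [eventually_gt_atTop 0] with p hp
        have h3 := htpos p hp
        have h4 := h1 p
        have h5 : 1 / 2 ≤ 1 / t p * x p 0 := by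
          rw [one_div_mul_eq_div, div_le_div_iff₀ (by norm_num) h3]
          have := h01 p
          have := hts p
          linarith
        have h6 : 0 ≤ 1 / t p * x p 1 := by positivity
        nlinarith
    have hs2 := smul_bdd_tendsto _ (fun p => cj (U p) ![1, -1]) hs
      (fun p i j => cj_bound (hU p) _ (by intro i; fin_cases i <;> simp) i j)
    have := hP.add hs2
    rw [add_zero] at this
    refine this.congr' ?_
    filter_upwards [eventually_gt_atTop 0] with p hp
    have h3 := htpos p hp
    rw [hMx p, cj_smul, cj_smul, cj_add]
    congr 1; ext i
    fin_cases i
    · simp only [Fin.zero_eta, Matrix.cons_val_zero]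
      rw [mul_one, ← mul_add, ← hts p]; field_simp
    · simp

lemma sqrt_mul_rpow (a b p : ℝ) (ha : 0 ≤ a) (hb : 0 ≤ b) :
    √(a * b) ^ p = √(a ^ p * b ^ p) := by
  rw [← Real.mul_rpow ha hb, Real.sqrt_eq_rpow, Real.sqrt_eq_rpow,
    ← Real.rpow_mul (mul_nonneg ha hb), ← Real.rpow_mul (mul_nonneg ha hb), mul_comm p]

lemma proj_lim (V W : Matrix (Fin 2) (Fin 2) ℂ) (a b : Fin 2 → ℝ)
    (ha : a 1 ≤ a 0) (hb : b 1 ≤ b 0) (ha0 : ∀ i, 0 ≤ a i) (hb0 : ∀ i, 0 ≤ b i)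
    (hlt : a 1 * b 0 < a 0 * b 1) :
    Tendsto (fun p : ℝ => ((1 / (√(b 0 ^ p * b 1 ^ p) * (a 0 ^ p + a 1 ^ p) +
        √(a 0 ^ p * a 1 ^ p) * (b 0 ^ p + b 1 ^ p)) : ℝ) : ℂ) •
      (((√(b 0 ^ p * b 1 ^ p) : ℝ) : ℂ) • cj V (fun i => a i ^ p) +
        ((√(a 0 ^ p * a 1 ^ p) : ℝ) : ℂ) • cj W (fun i => b i ^ p))) atTop
      (𝓝 (cj V ![1, 0])) := by
  have pos : 0 < a 0 * b 1 := lt_of_le_of_lt (mul_nonneg (ha0 1) (hb0 0)) hlt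
  have hb1 : 0 < b 1 := pos_of_mul_pos_right pos (ha0 0)
  have ha00 : 0 < a 0 := pos_of_mul_pos_left pos (hb0 1)
  have hb00 : 0 < b 0 := hb1.trans_le hb
  have ha10 : a 1 < a 0 := by
    by_contra hh
    have := mul_le_mul (not_lt.1 hh) hb hb1.le (ha0 1)
    linarith
  have r1 : Tendsto (fun p : ℝ => (a 1 / a 0) ^ p) atTop (𝓝 0) :=
    tendsto_rpow_atTop_of_base_lt_one _ (by have := div_nonneg (ha0 1) (ha0 0); linarith)
      ((div_lt_one ha00).2 ha10)
  have r2 : Tendsto (fun p : ℝ => (√(a 1 * b 0) / √(a 0 * b 1)) ^ p) atTop (𝓝 0) :=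
    tendsto_rpow_atTop_of_base_lt_one _
      (by have := div_nonneg (Real.sqrt_nonneg (a 1 * b 0)) (Real.sqrt_nonneg (a 0 * b 1)); linarith)
      ((div_lt_one (Real.sqrt_pos.2 pos)).2
        (Real.sqrt_lt_sqrt (mul_nonneg (ha0 1) (hb0 0)) hlt))
  set N : ℝ → ℝ := fun p => √(b 0 ^ p * b 1 ^ p) * (a 0 ^ p + a 1 ^ p) +
        √(a 0 ^ p * a 1 ^ p) * (b 0 ^ p + b 1 ^ p) with hN
  have pA0 : ∀ p : ℝ, 0 < a 0 ^ p := fun p => Real.rpow_pos_of_pos ha00 p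
  have pA1 : ∀ p : ℝ, 0 ≤ a 1 ^ p := fun p => Real.rpow_nonneg (ha0 1) p
  have pB0 : ∀ p : ℝ, 0 < b 0 ^ p := fun p => Real.rpow_pos_of_pos hb00 p
  have pB1 : ∀ p : ℝ, 0 < b 1 ^ p := fun p => Real.rpow_pos_of_pos hb1 p
  have pβ : ∀ p : ℝ, 0 < √(b 0 ^ p * b 1 ^ p) := fun p => Real.sqrt_pos.2 (mul_pos (pB0 p) (pB1 p))
  have pα : ∀ p : ℝ, 0 ≤ √(a 0 ^ p * a 1 ^ p) := fun p => Real.sqrt_nonneg _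
  have hNge : ∀ p, √(b 0 ^ p * b 1 ^ p) * a 0 ^ p ≤ N p := by
    intro p
    have e1 := mul_nonneg (pβ p).le (pA1 p)
    have e2 := mul_nonneg (pα p) (add_pos (pB0 p) (pB1 p)).le
    simp only [hN]
    linarith
  have hNpos : ∀ p, 0 < N p := fun p => (mul_pos (pβ p) (pA0 p)).trans_le (hNge p)
  have c1 : Tendsto (fun p => 1 / N p * (√(b 0 ^ p * b 1 ^ p) * a 1 ^ p)) atTop (𝓝 0) := by
    refine squeeze_zero (fun p => ?_) (fun p => ?_) r1
    · exact mul_nonneg (one_div_nonneg.2 (hNpos p).le) (mul_nonneg (pβ p).le (pA1 p))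
    · rw [one_div_mul_eq_div, Real.div_rpow (ha0 1) (ha0 0), div_le_div_iff₀ (hNpos p) (pA0 p)]
      nlinarith [mul_le_mul_of_nonneg_left (hNge p) (pA1 p)]
  have c2 : Tendsto (fun p => 1 / N p * (√(a 0 ^ p * a 1 ^ p) * b 0 ^ p)) atTop (𝓝 0) := by
    refine squeeze_zero (fun p => ?_) (fun p => ?_) r2
    · exact mul_nonneg (one_div_nonneg.2 (hNpos p).le) (mul_nonneg (pα p) (pB0 p).le)
    · have e : (√(a 1 * b 0) / √(a 0 * b 1)) ^ p =
          √(a 0 ^ p * a 1 ^ p) * b 0 ^ p / (√(b 0 ^ p * b 1 ^ p) * a 0 ^ p) := by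
        rw [Real.div_rpow (Real.sqrt_nonneg _) (Real.sqrt_nonneg _),
          sqrt_mul_rpow _ _ _ (ha0 1) (hb0 0), sqrt_mul_rpow _ _ _ (ha0 0) (hb0 1)]
        have q1 := pA0 p
        have q2 := pA1 p
        have q3 := pB0 p
        have q4 := pB1 p
        generalize a 0 ^ p = A0 at *
        generalize a 1 ^ p = A1 at *
        generalize b 0 ^ p = B0 at *
        generalize b 1 ^ p = B1 at *
        rw [Real.sqrt_mul q2, Real.sqrt_mul q1.le, Real.sqrt_mul q1.le, Real.sqrt_mul q3.le]
        have s1 := Real.sqrt_pos.2 q1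
        have s3 := Real.sqrt_pos.2 q3
        have s4 := Real.sqrt_pos.2 q4
        have w1 := Real.sq_sqrt q1.le
        have w3 := Real.sq_sqrt q3.le
        field_simp
        rw [w1, w3]; ring
      rw [e, one_div_mul_eq_div]
      exact div_le_div_of_nonneg_left (mul_nonneg (pα p) (pB0 p).le) (mul_pos (pβ p) (pA0 p))
        (hNge p)
  have c3 : Tendsto (fun p => 1 / N p * (√(a 0 ^ p * a 1 ^ p) * b 1 ^ p)) atTop (𝓝 0) := by
    refine tendsto_of_tendsto_of_tendsto_of_le_of_le' tendsto_const_nhds c2 ?_ ?_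
    · filter_upwards with p
      exact mul_nonneg (one_div_nonneg.2 (hNpos p).le) (mul_nonneg (pα p) (pB1 p).le)
    · filter_upwards [eventually_gt_atTop 0] with p hp
      exact mul_le_mul_of_nonneg_left (mul_le_mul_of_nonneg_left
        (Real.rpow_le_rpow hb1.le hb hp.le) (pα p)) (one_div_nonneg.2 (hNpos p).le)
  have c0 : Tendsto (fun p => 1 / N p * (√(b 0 ^ p * b 1 ^ p) * a 0 ^ p)) atTop (𝓝 1) := by
    have := ((tendsto_const_nhds (x := (1 : ℝ))).sub c1).sub (c2.add c3)
    rw [add_zero, sub_zero, sub_zero] at this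
    refine this.congr fun p => ?_
    have h1 : 1 / N p * N p = 1 := by have := (hNpos p).ne'; field_simp
    nth_rewrite 2 [hN] at h1
    linear_combination -h1
  have lV := cj_tendsto (l := atTop) V
    (fun p i => 1 / N p * (√(b 0 ^ p * b 1 ^ p) * a i ^ p)) ![1, 0]
    (by intro i; fin_cases i
        · exact c0
        · exact c1)
  have lW := cj_tendsto (l := atTop) W
    (fun p i => 1 / N p * (√(a 0 ^ p * a 1 ^ p) * b i ^ p)) (fun _ => 0)
    (by intro i; fin_cases i
        · exact c2
        · exact c3)
  have := lV.add lW
  have hz : cj W (fun _ => 0) = 0 := by simp [cj]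
  rw [hz, add_zero] at this
  refine this.congr fun p => ?_
  rw [smul_add, cj_smul, cj_smul, cj_smul, cj_smul]

lemma trace_bounds (A0 A1 B0 B1 u r : ℝ) (hA0 : 0 < A0) (hB0 : 0 < B0) (hA1 : 0 ≤ A1)
    (hB1 : 0 ≤ B1) (hA : A1 ≤ A0) (hB : B1 ≤ B0) (hu : 0 < u) (hu1 : u ≤ 1)
    (h1 : √(A0 * B1) ≤ r) (h2 : √(A1 * B0) ≤ r) (h3 : r = √(A0 * B1) ∨ r = √(A1 * B0)) :
    0 < 2 * √(A0 * A1) * √(B0 * B1) + TT u ![A0, A1] ![B0, B1] ∧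
    1 / 2 * r ≤ 1 / √(2 * √(A0 * A1) * √(B0 * B1) + TT u ![A0, A1] ![B0, B1]) *
      (√(B0 * B1) * (A0 + A1) + √(A0 * A1) * (B0 + B1)) ∧
    1 / √(2 * √(A0 * A1) * √(B0 * B1) + TT u ![A0, A1] ![B0, B1]) *
      (√(B0 * B1) * (A0 + A1) + √(A0 * A1) * (B0 + B1)) ≤ 4 / √u * r := by
  have hr0 : 0 ≤ r := (Real.sqrt_nonneg _).trans h1
  set α := √(A0 * A1) with hα
  set β := √(B0 * B1) with hβ
  have hα0 : 0 ≤ α := Real.sqrt_nonneg _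
  have hβ0 : 0 ≤ β := Real.sqrt_nonneg _
  have hαA : α ≤ A0 := by
    rw [hα, Real.sqrt_le_left hA0.le]; nlinarith
  have hβB : β ≤ B0 := by
    rw [hβ, Real.sqrt_le_left hB0.le]; nlinarith
  have hAB : 0 < A0 * B0 := mul_pos hA0 hB0
  have hTdef : TT u ![A0, A1] ![B0, B1] =
      A1 * (B0 * (1 - u) + B1 * u) + A0 * (B0 * u + B1 * (1 - u)) := by simp [TT]
  set T := TT u ![A0, A1] ![B0, B1]
  have hTl : u * (A0 * B0) ≤ T := by
    rw [hTdef]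
    have e1 : 0 ≤ A1 * (B0 * (1 - u) + B1 * u) := by
      have : 0 ≤ 1 - u := by linarith
      positivity
    have e2 : 0 ≤ A0 * (B1 * (1 - u)) := by
      have : 0 ≤ 1 - u := by linarith
      positivity
    nlinarith
  have hTu : T ≤ 2 * (A0 * B0) := by
    rw [hTdef]
    have e0 : 0 ≤ 1 - u := by linarith
    have e1 : B0 * (1 - u) + B1 * u ≤ B0 := by nlinarith
    have e2 : B0 * u + B1 * (1 - u) ≤ B0 := by nlinarith
    have e3 : A1 * (B0 * (1 - u) + B1 * u) ≤ A0 * B0 :=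
      mul_le_mul hA e1 (by positivity) hA0.le
    have e4 := mul_le_mul_of_nonneg_left e2 hA0.le
    linarith
  have hαβ : α * β ≤ A0 * B0 := mul_le_mul hαA hβB hβ0 hA0.le
  have hQl : u * (A0 * B0) ≤ 2 * α * β + T := by nlinarith [mul_nonneg hα0 hβ0]
  have hQu : 2 * α * β + T ≤ 4 * (A0 * B0) := by nlinarith
  have hQ : 0 < 2 * α * β + T := (mul_pos hu hAB).trans_le hQl
  refine ⟨hQ, ?_⟩
  set s := √(A0 * B0) with hs
  have hs0 : 0 < s := Real.sqrt_pos.2 hAB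
  have hDl : √u * s ≤ √(2 * α * β + T) := by
    rw [hs, ← Real.sqrt_mul hu.le]; exact Real.sqrt_le_sqrt hQl
  have hDu : √(2 * α * β + T) ≤ 2 * s := by
    rw [Real.sqrt_le_left (by positivity)]
    have := Real.sq_sqrt hAB.le
    nlinarith
  have hD0 : 0 < √(2 * α * β + T) := Real.sqrt_pos.2 hQ
  set D := √(2 * α * β + T)
  have f1 : β * A0 = s * √(A0 * B1) := by
    rw [hβ, hs, ← Real.sqrt_mul hAB.le, show A0 * B0 * (A0 * B1) = (B0 * B1) * (A0 ^ 2) by ring,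
      Real.sqrt_mul (show 0 ≤ B0 * B1 by positivity) (A0 ^ 2), Real.sqrt_sq hA0.le]
  have f2 : α * B0 = s * √(A1 * B0) := by
    rw [hα, hs, ← Real.sqrt_mul hAB.le, show A0 * B0 * (A1 * B0) = (A0 * A1) * (B0 ^ 2) by ring,
      Real.sqrt_mul (show 0 ≤ A0 * A1 by positivity) (B0 ^ 2), Real.sqrt_sq hB0.le]
  have g1 := mul_le_mul_of_nonneg_left hA hβ0
  have g2 := mul_le_mul_of_nonneg_left hB hα0
  have g3 := mul_le_mul_of_nonneg_left h1 hs0.le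
  have g4 := mul_le_mul_of_nonneg_left h2 hs0.le
  have n1 := mul_nonneg hβ0 hA1
  have n2 := mul_nonneg hα0 hB1
  have n3 := mul_nonneg hβ0 hA0.le
  have n4 := mul_nonneg hα0 hB0.le
  have hNl : s * r ≤ β * (A0 + A1) + α * (B0 + B1) := by
    rcases h3 with h | h
    · rw [h, ← f1]; linarith
    · rw [h, ← f2]; linarith
  have hNu : β * (A0 + A1) + α * (B0 + B1) ≤ 4 * (s * r) := by linarith
  have hsu : 0 < √u := Real.sqrt_pos.2 hu
  constructor
  · rw [one_div_mul_eq_div D, le_div_iff₀ hD0]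
    nlinarith [mul_le_mul_of_nonneg_left hDu hr0]
  · rw [one_div_mul_eq_div D, div_le_iff₀ hD0]
    have : 4 * (s * r) = 4 / √u * r * (√u * s) := by field_simp
    calc _ ≤ _ := hNu
      _ = _ := this
      _ ≤ _ := mul_le_mul_of_nonneg_left hDl (by positivity)

lemma cj_of_diag {V W : Matrix (Fin 2) (Fin 2) ℂ} (hV : V ∈ Matrix.unitaryGroup (Fin 2) ℂ)
    (hW : W ∈ Matrix.unitaryGroup (Fin 2) ℂ) (b : Fin 2 → ℝ) (h : (Vᴴ * W) 0 1 = 0) :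
    cj W b = cj V b := by
  have hU : Vᴴ * W ∈ Matrix.unitaryGroup (Fin 2) ℂ := mul_mem (Unitary.star_mem hV) hW
  obtain ⟨-, h2, -⟩ := uni_entries hU
  have h10 : (Vᴴ * W) 1 0 = 0 := by
    rw [h] at h2
    simpa using h2
  have hWV : W = V * (Vᴴ * W) := by rw [← Matrix.mul_assoc, uni_r hV, Matrix.one_mul]
  have hr := uni_r hU
  generalize Vᴴ * W = U at *
  have hc : U * Matrix.diagonal (fun i => (b i : ℂ)) = Matrix.diagonal (fun i => (b i : ℂ)) * U := by
    ext i j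
    rw [Matrix.mul_diagonal, Matrix.diagonal_mul]
    fin_cases i <;> fin_cases j <;> simp [h, h10, mul_comm]
  unfold cj
  rw [hWV, Matrix.conjTranspose_mul]
  calc _ = V * (U * Matrix.diagonal (fun i => (b i : ℂ))) * Uᴴ * Vᴴ := by
        simp only [Matrix.mul_assoc]
    _ = V * Matrix.diagonal (fun i => (b i : ℂ)) * (U * Uᴴ) * Vᴴ := by
        rw [hc]; simp only [Matrix.mul_assoc]
    _ = _ := by rw [hr, Matrix.mul_one]

lemma main_case {V W : Matrix (Fin 2) (Fin 2) ℂ} (a b : Fin 2 → ℝ)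
    (hV : V ∈ Matrix.unitaryGroup (Fin 2) ℂ) (hW : W ∈ Matrix.unitaryGroup (Fin 2) ℂ)
    (ha : a 1 ≤ a 0) (hb : b 1 ≤ b 0) (ha0 : ∀ i, 0 ≤ a i) (hb0 : ∀ i, 0 ≤ b i)
    (ha00 : 0 < a 0) (hb00 : 0 < b 0) (h : (Vᴴ * W) 0 1 ≠ 0) :
    ∃ U ∈ Matrix.unitaryGroup (Fin 2) ℂ, Tendsto (fun p : ℝ => Gmat (cj V a) (cj W b) p) atTop
      (𝓝 (cj U ![max (a 0 * b 1) (a 1 * b 0), min (a 0 * b 1) (a 1 * b 0)])) := by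
  set u := Complex.normSq ((Vᴴ * W) 0 1) with hu
  have hu0 : 0 < u := Complex.normSq_pos.2 h
  have hu1 : u ≤ 1 := by
    have hU : Vᴴ * W ∈ Matrix.unitaryGroup (Fin 2) ℂ := mul_mem (Unitary.star_mem hV) hW
    obtain ⟨h2, -, -⟩ := uni_entries hU
    have := Complex.normSq_nonneg ((Vᴴ * W) 0 0)
    linarith
  set m := max (a 0 * b 1) (a 1 * b 0) with hm
  set m' := min (a 0 * b 1) (a 1 * b 0) with hm'
  have p01 : 0 ≤ a 0 * b 1 := mul_nonneg (ha0 0) (hb0 1)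
  have p10 : 0 ≤ a 1 * b 0 := mul_nonneg (ha0 1) (hb0 0)
  have hm'0 : 0 ≤ m' := le_min p01 p10
  have hmm : m' ≤ m := min_le_max
  have hprod : m * m' = (a 0 * a 1) * (b 0 * b 1) := by
    rw [hm, hm', max_mul_min]; ring
  let α : ℝ → ℝ := fun p => √(a 0 ^ p * a 1 ^ p)
  let β : ℝ → ℝ := fun p => √(b 0 ^ p * b 1 ^ p)
  let T : ℝ → ℝ := fun p => TT u (fun i => a i ^ p) (fun i => b i ^ p)
  let D : ℝ → ℝ := fun p => √(2 * α p * β p + T p)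
  let N : ℝ → ℝ := fun p => β p * (a 0 ^ p + a 1 ^ p) + α p * (b 0 ^ p + b 1 ^ p)
  let K : ℝ → Matrix (Fin 2) (Fin 2) ℂ := fun p =>
    (β p : ℂ) • cj V (fun i => a i ^ p) + (α p : ℂ) • cj W (fun i => b i ^ p)
  let M : ℝ → Matrix (Fin 2) (Fin 2) ℂ := fun p => ((1 / D p : ℝ) : ℂ) • K p
  have pa : ∀ (p : ℝ) i, 0 ≤ a i ^ p := fun p i => Real.rpow_nonneg (ha0 i) p
  have pb : ∀ (p : ℝ) i, 0 ≤ b i ^ p := fun p i => Real.rpow_nonneg (hb0 i) p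
  have hbd : ∀ p, 0 < p → 0 < 2 * α p * β p + T p ∧ 1 / 2 * √m ^ p ≤ 1 / D p * N p ∧
      1 / D p * N p ≤ 4 / √u * √m ^ p := by
    intro p hp
    have h1 : √(a 0 ^ p * b 1 ^ p) ≤ √m ^ p := by
      rw [← sqrt_mul_rpow _ _ _ (ha0 0) (hb0 1)]
      exact Real.rpow_le_rpow (Real.sqrt_nonneg _) (Real.sqrt_le_sqrt (le_max_left _ _)) hp.le
    have h2 : √(a 1 ^ p * b 0 ^ p) ≤ √m ^ p := by
      rw [← sqrt_mul_rpow _ _ _ (ha0 1) (hb0 0)]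
      exact Real.rpow_le_rpow (Real.sqrt_nonneg _) (Real.sqrt_le_sqrt (le_max_right _ _)) hp.le
    have h3 : √m ^ p = √(a 0 ^ p * b 1 ^ p) ∨ √m ^ p = √(a 1 ^ p * b 0 ^ p) := by
      rw [← sqrt_mul_rpow _ _ _ (ha0 0) (hb0 1), ← sqrt_mul_rpow _ _ _ (ha0 1) (hb0 0)]
      rcases max_choice (a 0 * b 1) (a 1 * b 0) with e | e
      · left; rw [hm, e]
      · right; rw [hm, e]
    exact trace_bounds (a 0 ^ p) (a 1 ^ p) (b 0 ^ p) (b 1 ^ p) u (√m ^ p)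
      (Real.rpow_pos_of_pos ha00 p) (Real.rpow_pos_of_pos hb00 p) (pa p 1) (pb p 1)
      (Real.rpow_le_rpow (ha0 1) ha hp.le) (Real.rpow_le_rpow (hb0 1) hb hp.le) hu0 hu1 h1 h2 h3
  have hMpsd : ∀ p, (M p).PosSemidef := by
    intro p
    have sm : ∀ (c : ℝ) (X : Matrix (Fin 2) (Fin 2) ℂ), 0 ≤ c → X.PosSemidef →
        ((c : ℂ) • X).PosSemidef := by
      intro c X hc hX
      exact hX.smul (by exact_mod_cast hc)
    exact sm _ _ (one_div_nonneg.2 (Real.sqrt_nonneg _))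
      ((sm _ _ (Real.sqrt_nonneg _) (cj_psd V _ (pa p))).add
        (sm _ _ (Real.sqrt_nonneg _) (cj_psd W _ (pb p))))
  have htr : ∀ p, (M p).trace = ((1 / D p * N p : ℝ) : ℂ) := by
    intro p
    simp only [M, K, N, Matrix.trace_smul, Matrix.trace_add, cj_trace hV, cj_trace hW, smul_eq_mul]
    push_cast
    ring
  have hdet : ∀ p, 0 < p → (M p).det = ((√(m * m') ^ p : ℝ) : ℂ) := by
    intro p hp
    have hQ := (hbd p hp).1
    have e1 : √(m * m') ^ p = α p * β p := by
      rw [hprod, Real.sqrt_mul (mul_nonneg (ha0 0) (ha0 1)),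
        Real.mul_rpow (Real.sqrt_nonneg _) (Real.sqrt_nonneg _), sqrt_mul_rpow _ _ _ (ha0 0) (ha0 1),
        sqrt_mul_rpow _ _ _ (hb0 0) (hb0 1)]
    have e2 : (K p).det = ((α p * β p * (2 * α p * β p + T p) : ℝ) : ℂ) := by
      simp only [K]
      rw [det_comb, cj_det hV, cj_det hW, trace_adj hV hW, ← hu]
      have q1 : a 0 ^ p * a 1 ^ p = α p ^ 2 := (Real.sq_sqrt (mul_nonneg (pa p 0) (pa p 1))).symm
      have q2 : b 0 ^ p * b 1 ^ p = β p ^ 2 := (Real.sq_sqrt (mul_nonneg (pb p 0) (pb p 1))).symm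
      rw [q1, q2]
      simp only [T]
      push_cast
      ring
    have e3 : D p ^ 2 = 2 * α p * β p + T p := Real.sq_sqrt hQ.le
    have e4 : 0 < D p := Real.sqrt_pos.2 hQ
    rw [e1]
    simp only [M]
    rw [Matrix.det_smul, e2, ← e3, Fintype.card_fin, ← Complex.ofReal_pow, ← Complex.ofReal_mul]
    congr 1
    field_simp
  have hG : ∀ p, 0 < p → Gmat (cj V a) (cj W b) p = psdPow (M p) (2 / p) := by
    intro p hp
    unfold Gmat
    rw [psdPow_cj hV, psdPow_cj hW, geoMean_formula hV hW _ _ (pa p) (pb p) u hu (hbd p hp).1]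
  have hratio : ∀ p, 0 < p → ((1 / N p : ℝ) : ℂ) • K p =
      ((1 / (1 / D p * N p) : ℝ) : ℂ) • M p := by
    intro p hp
    have e4 : 0 < D p := Real.sqrt_pos.2 (hbd p hp).1
    simp only [M]
    rw [smul_smul, ← Complex.ofReal_mul]
    congr 2
    rw [one_div_mul_eq_div, ← div_div, div_self (one_div_pos.2 e4).ne']
  have fin : ∀ U ∈ Matrix.unitaryGroup (Fin 2) ℂ, (m' = m ∨ (m' < m ∧
      Tendsto (fun p => ((1 / N p : ℝ) : ℂ) • K p) atTop (𝓝 (cj U ![1, 0])))) →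
      Tendsto (fun p : ℝ => Gmat (cj V a) (cj W b) p) atTop (𝓝 (cj U ![m, m'])) := by
    intro U hU hc
    have := core M hMpsd (fun p => 1 / D p * N p) htr m m' (1 / 2) (4 / √u) (by norm_num)
      (by positivity) hm'0 hmm (fun p hp => (hbd p hp).2.1) (fun p hp => (hbd p hp).2.2) hdet U hU
      (by
        refine hc.imp id fun hc => ⟨hc.1, hc.2.congr' ?_⟩
        filter_upwards [eventually_gt_atTop 0] with p hp
        exact hratio p hp)
    refine this.congr' ?_
    filter_upwards [eventually_gt_atTop 0] with p hp
    exact (hG p hp).symm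
  rcases lt_trichotomy (a 0 * b 1) (a 1 * b 0) with hlt | heq | hlt
  · refine ⟨W, hW, fin W hW (Or.inr ⟨by rw [hm, hm', max_eq_right hlt.le, min_eq_left hlt.le]; exact hlt, ?_⟩)⟩
    have := proj_lim W V b a hb ha hb0 ha0 (by linarith)
    refine this.congr fun p => ?_
    simp only [K, N, α, β]
    rw [add_comm (_ • cj W _), add_comm (√(a 0 ^ p * a 1 ^ p) * _)]
  · exact ⟨V, hV, fin V hV (Or.inl (by rw [hm, hm', heq]; simp))⟩
  · refine ⟨V, hV, fin V hV (Or.inr ⟨by rw [hm, hm', max_eq_left hlt.le, min_eq_right hlt.le]; exact hlt, ?_⟩)⟩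
    exact proj_lim V W a b ha hb ha0 hb0 hlt

/-- For `2×2` positive semidefinite matrices, `G_p = (A^p # B^p)^{2/p}` converges as
`p → ∞` to a positive semidefinite matrix whose decreasingly ordered eigenvalues are
`(a_1 b_1, a_2 b_2)` if `(V*W)_{12} = 0` and
`(max{a_1 b_2, a_2 b_1}, min{a_1 b_2, a_2 b_1})` otherwise. -/
theorem geometric_mean_two_by_two_limit
    (A B V W : Matrix (Fin 2) (Fin 2) ℂ) (a b : Fin 2 → ℝ)
    (hA : A.PosSemidef) (hB : B.PosSemidef)
    (hV : V ∈ Matrix.unitaryGroup (Fin 2) ℂ)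
    (hW : W ∈ Matrix.unitaryGroup (Fin 2) ℂ)
    (ha : a 1 ≤ a 0) (hb : b 1 ≤ b 0)
    (ha0 : ∀ i, 0 ≤ a i) (hb0 : ∀ i, 0 ≤ b i)
    (hAd : A = V * Matrix.diagonal (fun i => (a i : ℂ)) * Vᴴ)
    (hBd : B = W * Matrix.diagonal (fun i => (b i : ℂ)) * Wᴴ) :
    ∃ G : Matrix (Fin 2) (Fin 2) ℂ, G.PosSemidef ∧
      Tendsto (fun p : ℝ => Gmat A B p) atTop (𝓝 G) ∧
      eigsDesc G =
        (if (Vᴴ * W) 0 1 = 0 then ![a 0 * b 0, a 1 * b 1]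
          else ![max (a 0 * b 1) (a 1 * b 0), min (a 0 * b 1) (a 1 * b 0)]) := by
  have hA' : A = cj V a := hAd
  have hB' : B = cj W b := hBd
  rw [hA', hB']
  have comm : ∀ U ∈ Matrix.unitaryGroup (Fin 2) ℂ, cj V a = cj U a → cj W b = cj U b →
      (cj U (fun i => a i * b i)).PosSemidef ∧
      Tendsto (fun p : ℝ => Gmat (cj V a) (cj W b) p) atTop (𝓝 (cj U (fun i => a i * b i))) ∧
      eigsDesc (cj U (fun i => a i * b i)) = ![a 0 * b 0, a 1 * b 1] := by
    intro U hU h1 h2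
    refine ⟨cj_psd _ _ fun i => mul_nonneg (ha0 i) (hb0 i), ?_, ?_⟩
    · refine tendsto_const_nhds.congr' ?_
      filter_upwards [eventually_gt_atTop 0] with p hp
      rw [h1, h2, Gmat_comm hU a b ha0 hb0 p hp]
    · exact eigsDesc_cj hU _ (mul_le_mul ha hb (hb0 1) (ha0 0))
  by_cases h : (Vᴴ * W) 0 1 = 0
  · rw [if_pos h]
    exact ⟨_, comm V hV rfl (cj_of_diag hV hW b h)⟩
  · rw [if_neg h]
    have zero : ∀ x : Fin 2 → ℝ, x 1 ≤ x 0 → (∀ i, 0 ≤ x i) → ¬ 0 < x 0 → x = fun _ => 0 := by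
      intro x h1 h2 h3
      have e0 : x 0 = 0 := le_antisymm (not_lt.1 h3) (h2 0)
      have e1 : x 1 = 0 := le_antisymm (e0 ▸ h1) (h2 1)
      ext i; fin_cases i
      · exact e0
      · exact e1
    by_cases ha00 : 0 < a 0
    · by_cases hb00 : 0 < b 0
      · obtain ⟨U, hU, hl⟩ := main_case a b hV hW ha hb ha0 hb0 ha00 hb00 h
        refine ⟨_, cj_psd U _ ?_, hl, ?_⟩
        · have p01 : 0 ≤ a 0 * b 1 := mul_nonneg (ha0 0) (hb0 1)
          have p10 : 0 ≤ a 1 * b 0 := mul_nonneg (ha0 1) (hb0 0)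
          intro i; fin_cases i
          · exact le_max_of_le_left p01
          · exact le_min p01 p10
        · exact eigsDesc_cj hU _ min_le_max
      · have hz := zero b hb hb0 hb00
        obtain ⟨h1, h2, h3⟩ := comm V hV rfl (by rw [hz]; simp [cj])
        refine ⟨_, h1, h2, ?_⟩
        rw [h3, hz]; simp
    · have hz := zero a ha ha0 ha00
      obtain ⟨h1, h2, h3⟩ := comm W hW (by rw [hz]; simp [cj]) rfl
      refine ⟨_, h1, h2, ?_⟩
      rw [h3, hz]; simp
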